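/- Let G be a finite subgroup of SL(3,ℂ) acting irreducibly on ℂ³, and suppose G has a nonzero semi-invariant homogeneous polynomial f of degree at most 2. Then f has degree exactly 2, the quadratic form f is nondegenerate (its zero locus in ℙ² is a smooth conic left invariant by Ḡ), and Ḡ, the image of G in PGL(3,ℂ), is isomorphic to a dihedral group of order 2n for some n ≥ 2, to the alternating group A₄, to the symmetric group S₄, or to the alternating group A₅. -/

import Mathlib

open Matrix

/-!
A semi-invariant linear form has an invariant kernel, so it vanishes. If `f` is quadratic with
`f (g v) = χ g * f v`, then its radical is invariant, so `f` is nondegenerate, and comparing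
determinants gives `χ ^ 3 = 1`; hence `χ g • g` preserves `f` and has determinant `1`. Twisting by
`χ` thus turns `G` into a group of rotations for `f`. It is isomorphic to `Ḡ`, since the only scalar
rotation in odd dimension is the identity.

Each nontrivial rotation fixes exactly two poles, the unit vectors on its axis. Irreducibility rules
out orbits with at most two poles, which every cyclic or dihedral rotation group has. Burnside's
lemma then leaves three orbits, with stabilizers of orders `(2, 3, 3)`, `(2, 3, 4)` or `(2, 3, 5)`.
These give `A₄` (acting on an orbit of four poles), `S₄` (on the Sylow 3-subgroups) and `A₅` (on the
Sylow 2-subgroups). In particular the dihedral case never occurs.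
-/

open MulAction

section FaithfulActions

variable {H X : Type*} [Group H] [MulAction H X]

lemma exists_injective_hom_perm_fin [Finite X] {n : ℕ} (hX : Nat.card X = n)
    (hinj : Function.Injective (toPermHom H X)) :
    ∃ ψ : H →* Equiv.Perm (Fin n), Function.Injective ψ :=
  let e : X ≃ Fin n := Finite.equivFinOfCardEq hX
  ⟨e.permCongrHom.toMonoidHom.comp (toPermHom H X), e.permCongrHom.injective.comp hinj⟩

lemma nonempty_mulEquiv_perm_of_card_eq_factorial [Finite X] {n : ℕ} (hX : Nat.card X = n)
    (hinj : Function.Injective (toPermHom H X)) (hH : Nat.card H = n.factorial) :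
    Nonempty (H ≃* Equiv.Perm (Fin n)) := by
  obtain ⟨ψ, hψ⟩ := exists_injective_hom_perm_fin hX hinj
  have hcard : Nat.card H = Nat.card (Equiv.Perm (Fin n)) := by
    rw [hH, Nat.card_perm, Nat.card_fin]
  exact ⟨.ofBijective ψ ((Nat.bijective_iff_injective_and_card _).mpr ⟨hψ, hcard⟩)⟩

lemma nonempty_mulEquiv_alternatingGroup_of_two_mul_card_eq_factorial [Finite X] {n : ℕ}
    (hn : 2 ≤ n) (hX : Nat.card X = n) (hinj : Function.Injective (toPermHom H X))
    (hH : 2 * Nat.card H = n.factorial) : Nonempty (H ≃* alternatingGroup (Fin n)) := by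
  have : Nontrivial (Fin n) := Fin.nontrivial_iff_two_le.mpr hn
  obtain ⟨ψ, hψ⟩ := exists_injective_hom_perm_fin hX hinj
  have hcard : Nat.card ψ.range = Nat.card H :=
    (Nat.card_congr (MonoidHom.ofInjective hψ).toEquiv).symm
  have hindex : ψ.range.index = 2 := by
    refine Nat.eq_of_mul_eq_mul_right (Nat.card_pos (α := ψ.range)) ?_
    rw [Subgroup.index_mul_card, hcard, hH, Nat.card_perm, Nat.card_fin]
  rw [← Equiv.Perm.eq_alternatingGroup_of_index_eq_two hindex]
  exact ⟨MonoidHom.ofInjective hψ⟩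

end FaithfulActions

section SylowActions

variable {H : Type*} [Group H] [Finite H] {p : ℕ} [Fact p.Prime]

lemma card_sylow_mul_card_ker_dvd :
    Nat.card (Sylow p H) * Nat.card (toPermHom H (Sylow p H)).ker ∣ Nat.card H := by
  obtain ⟨Q⟩ : Nonempty (Sylow p H) := inferInstance
  have hle : (toPermHom H (Sylow p H)).ker ≤ Subgroup.normalizer (Q : Set H) := fun g hg =>
    Sylow.smul_eq_iff_mem_normalizer.mp (Equiv.ext_iff.mp (MonoidHom.mem_ker.mp hg) Q)
  rw [Q.card_eq_index_normalizer, ← Subgroup.index_mul_card (Subgroup.normalizer (Q : Set H))]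
  exact mul_dvd_mul_left _ (Subgroup.card_dvd_of_le hle)

lemma card_sylow_eq_pow {k m : ℕ} (hH : Nat.card H = p ^ k * m) (hm : ¬ p ∣ m) (Q : Sylow p H) :
    Nat.card (Q : Subgroup H) = p ^ k := by
  have hp : p.Prime := Fact.out
  have hm0 : m ≠ 0 := by rintro rfl; exact hm (dvd_zero p)
  rw [Q.card_eq_multiplicity, hH, Nat.factorization_mul (pow_ne_zero k hp.ne_zero) hm0,
    Finsupp.add_apply, hp.factorization_pow, Finsupp.single_eq_same,
    Nat.factorization_eq_zero_of_not_dvd hm, add_zero]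

lemma not_dvd_card_ker_of_card_sylow_eq_prime (hcard : ∀ Q : Sylow p H, Nat.card Q = p)
    (hsylow : Nat.card (Sylow p H) ≠ 1) : ¬ p ∣ Nat.card (toPermHom H (Sylow p H)).ker := by
  intro hdvd
  obtain ⟨⟨c, hc⟩, hord⟩ := exists_prime_orderOf_dvd_card' p hdvd
  rw [Subgroup.orderOf_mk] at hord
  have hzpowers : Nat.card (Subgroup.zpowers c) = p := by rw [Nat.card_zpowers, hord]
  have hle (Q : Sylow p H) : Subgroup.zpowers c ≤ Q := by
    rw [← (IsPGroup.of_card (n := 1) (by rw [hzpowers, pow_one])).sylow_mem_fixedPoints_iff]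
    rintro ⟨g, hg⟩
    exact Equiv.ext_iff.mp (MonoidHom.mem_ker.mp (Subgroup.zpowers_le.mpr hc hg)) Q
  have heq (Q : Sylow p H) : Subgroup.zpowers c = Q :=
    Subgroup.eq_of_le_of_card_ge (hle Q) ((hcard Q).trans hzpowers.symm).le
  exact hsylow (Nat.card_eq_one_iff_unique.mpr
    ⟨⟨fun Q R => Sylow.ext ((heq Q).symm.trans (heq R))⟩, inferInstance⟩)

end SylowActions

section OrbitCounting

variable {H P : Type*} [Group H] [MulAction H P]

lemma ncard_orbit_mul_card_stabilizer (x : P) :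
    (orbit H x).ncard * Nat.card (stabilizer H x) = Nat.card H := by
  rw [← index_stabilizer, Subgroup.index_mul_card]

lemma card_stabilizer_eq_of_mem_orbit {x y : P} (h : y ∈ orbit H x) :
    Nat.card (stabilizer H y) = Nat.card (stabilizer H x) := by
  obtain ⟨g, rfl⟩ := h
  exact Nat.card_congr (stabilizerEquivStabilizer rfl).symm.toEquiv

lemma exists_monotone_orbit_representatives [Finite P] {n : ℕ}
    (hn : Nat.card (orbitRel.Quotient H P) = n) :
    ∃ r : Fin n → P, (∀ x, ∃ i, x ∈ orbit H (r i)) ∧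
      ∑ i, (orbit H (r i)).ncard = Nat.card P ∧
      Monotone fun i => Nat.card (stabilizer H (r i)) := by
  let e : Fin n ≃ orbitRel.Quotient H P := (Finite.equivFinOfCardEq hn).symm
  let m (i : Fin n) : ℕ := Nat.card (stabilizer H (e i).out)
  let σ := Tuple.sort m
  refine ⟨fun i => (e (σ i)).out, fun x => ?_, ?_, Tuple.monotone_sort m⟩
  · refine ⟨σ.symm (e.symm (Quotient.mk _ x)), orbitRel_apply.mp (Quotient.exact ?_)⟩
    simp only [Equiv.apply_symm_apply, Quotient.out_eq]
  · have := Fintype.ofFinite (orbitRel.Quotient H P)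
    rw [Nat.card_congr (selfEquivSigmaOrbits H P), Nat.card_sigma]
    exact Equiv.sum_comp (σ.trans e) fun ω => (orbit H ω.out).ncard

end OrbitCounting

/-- Every nontrivial element of `H` fixes exactly two points of `P`, as happens for a finite group
of rotations acting on its poles, the unit vectors on the rotation axes. -/
def HasTwoFixedPoints (H P : Type*) [Group H] [MulAction H P] : Prop :=
  ∀ g : H, g ≠ 1 → (fixedBy P g).ncard = 2

/-- `H` has at most three orbits on `P`, represented by points whose stabilizers have orders `k`,
`l` and `m`; the representatives may share an orbit. -/
def HasOrbitSignature (H P : Type*) [Group H] [MulAction H P] (k l m : ℕ) : Prop :=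
  ∃ a b c : P, (∀ x, x ∈ orbit H a ∨ x ∈ orbit H b ∨ x ∈ orbit H c) ∧
    Nat.card (stabilizer H a) = k ∧ Nat.card (stabilizer H b) = l ∧ Nat.card (stabilizer H c) = m

/-- `H` is isomorphic to the rotation group of a regular polyhedron: tetrahedron, octahedron or
icosahedron. -/
def IsPolyhedral (H : Type*) [Group H] : Prop :=
  Nonempty (H ≃* alternatingGroup (Fin 4)) ∨ Nonempty (H ≃* Equiv.Perm (Fin 4)) ∨
    Nonempty (H ≃* alternatingGroup (Fin 5))

lemma IsPolyhedral.of_mulEquiv {H H' : Type*} [Group H] [Group H'] (h : IsPolyhedral H)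
    (e : H' ≃* H) : IsPolyhedral H' :=
  h.imp (Nonempty.map e.trans) (Or.imp (Nonempty.map e.trans) (Nonempty.map e.trans))

-- Dividing by `N` turns the sum into `1/k + 1/l + 1/m = 1 + 2/N`.
lemma orbit_signature_arithmetic {N x y z k l m : ℕ} (hx : x * k = N) (hy : y * l = N)
    (hz : z * m = N) (hz3 : 3 ≤ z) (hk2 : 2 ≤ k) (hkl : k ≤ l) (hlm : l ≤ m)
    (hsum : x + y + z = N + 2) :
    k = 2 ∧ l = 3 ∧ (m = 3 ∧ N = 12 ∨ m = 4 ∧ N = 24 ∨ m = 5 ∧ N = 60) := by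
  have hk : k = 2 := by
    by_contra hne
    have := hx ▸ Nat.mul_le_mul_left x (show 3 ≤ k by omega)
    have := hy ▸ Nat.mul_le_mul_left y (show 3 ≤ l by omega)
    have := hz ▸ Nat.mul_le_mul_left z (show 3 ≤ m by omega)
    omega
  subst hk
  have hl : l = 3 := by
    by_contra hne
    obtain rfl | hl : l = 2 ∨ 4 ≤ l := by omega
    · omega
    · have := hy ▸ Nat.mul_le_mul_left y hl
      have := hz ▸ Nat.mul_le_mul_left z (hl.trans hlm)
      omega
  subst hl
  have hm : m < 6 := by
    by_contra! hm
    have := hz ▸ Nat.mul_le_mul_left z hm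
    omega
  interval_cases m <;> omega

namespace HasTwoFixedPoints

variable {H P : Type*} [Group H] [MulAction H P]

lemma finite_fixedBy (h : HasTwoFixedPoints H P) {g : H} (hg : g ≠ 1) : (fixedBy P g).Finite :=
  Set.finite_of_ncard_ne_zero (by rw [h g hg]; decide)

lemma exists_smul_eq (h : HasTwoFixedPoints H P) {g : H} (hg : g ≠ 1) : ∃ x : P, g • x = x :=
  Set.nonempty_of_ncard_ne_zero (s := fixedBy P g) (by rw [h g hg]; decide)

lemma eq_one_of_forall_mem_smul_eq (h : HasTwoFixedPoints H P) {g : H} {s : Set P}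
    (hs : 2 < s.ncard) (hg : ∀ x ∈ s, g • x = x) : g = 1 := by
  by_contra hne
  have hle := Set.ncard_le_ncard (show s ⊆ fixedBy P g from hg) (h.finite_fixedBy hne)
  rw [h g hne] at hle
  omega

section Signature

variable [Finite H] [Finite P]

-- Burnside's lemma, with the identity counted separately.
lemma card_add_two_mul_card (h : HasTwoFixedPoints H P) :
    Nat.card P + 2 * (Nat.card H - 1) = Nat.card (orbitRel.Quotient H P) * Nat.card H := by
  classical
  have := Fintype.ofFinite H
  have := Fintype.ofFinite P
  simp only [Nat.card_eq_fintype_card]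
  rw [← sum_card_fixedBy_eq_card_orbits_mul_card_group, Fintype.sum_eq_add_sum_compl 1]
  have hone : Fintype.card (fixedBy P (1 : H)) = Fintype.card P := by
    simp only [fixedBy_one_eq_univ, Fintype.card_setUniv]
  have htwo (g : H) (hg : g ∈ ({1} : Finset H)ᶜ) : Fintype.card (fixedBy P g) = 2 := by
    rw [← Nat.card_eq_fintype_card, Nat.card_coe_set_eq,
      h g (Finset.notMem_singleton.mp (Finset.mem_compl.mp hg))]
  rw [hone, Finset.sum_congr rfl htwo, Finset.sum_const, Finset.card_compl,
    Finset.card_singleton, smul_eq_mul, mul_comm]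

lemma card_orbits_eq_three [Nontrivial H] (h : HasTwoFixedPoints H P)
    (hstab : ∀ x : P, 2 ≤ Nat.card (stabilizer H x)) (horb : ∀ x : P, 3 ≤ (orbit H x).ncard) :
    Nat.card (orbitRel.Quotient H P) = 3 := by
  have hburnside := h.card_add_two_mul_card
  generalize hk : Nat.card (orbitRel.Quotient H P) = k at hburnside ⊢
  obtain ⟨r, -, hsum, -⟩ := exists_monotone_orbit_representatives hk
  have hlower : k * 3 ≤ Nat.card P := by
    rw [← hsum]
    simpa using Finset.card_nsmul_le_sum Finset.univ _ 3 fun i _ => horb (r i)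
  have hupper : 2 * Nat.card P ≤ k * Nat.card H := by
    have hle (i : Fin k) : 2 * (orbit H (r i)).ncard ≤ Nat.card H := by
      rw [← ncard_orbit_mul_card_stabilizer (r i), mul_comm]
      exact Nat.mul_le_mul_left _ (hstab _)
    rw [← hsum, Finset.mul_sum]
    simpa using Finset.sum_le_card_nsmul Finset.univ _ _ fun i _ => hle i
  have hN : 1 < Nat.card H := Finite.one_lt_card
  have hk4 : k < 4 := by
    by_contra! hk4
    have := Nat.mul_le_mul_right (Nat.card H) hk4
    omega
  interval_cases k <;> omega

lemma orbitSignature [Nontrivial H] (h : HasTwoFixedPoints H P)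
    (hstab : ∀ x : P, 2 ≤ Nat.card (stabilizer H x)) (horb : ∀ x : P, 3 ≤ (orbit H x).ncard) :
    HasOrbitSignature H P 2 3 3 ∧ Nat.card H = 12 ∨
    HasOrbitSignature H P 2 3 4 ∧ Nat.card H = 24 ∨
    HasOrbitSignature H P 2 3 5 ∧ Nat.card H = 60 := by
  have hthree := h.card_orbits_eq_three hstab horb
  obtain ⟨r, hcover, hsum, hmono⟩ := exists_monotone_orbit_representatives hthree
  have hburnside := h.card_add_two_mul_card
  have hpos : 0 < Nat.card H := Nat.card_pos
  have hsum' : (orbit H (r 0)).ncard + (orbit H (r 1)).ncard + (orbit H (r 2)).ncard =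
      Nat.card H + 2 := by
    rw [hthree] at hburnside
    rw [Fin.sum_univ_three] at hsum
    omega
  obtain ⟨h₀, h₁, h₂⟩ := orbit_signature_arithmetic (ncard_orbit_mul_card_stabilizer (r 0))
    (ncard_orbit_mul_card_stabilizer (r 1)) (ncard_orbit_mul_card_stabilizer (r 2))
    (horb _) (hstab _) (hmono (show (0 : Fin 3) ≤ 1 by decide))
    (hmono (show (1 : Fin 3) ≤ 2 by decide)) hsum'
  have hsig : HasOrbitSignature H P 2 3 (Nat.card (stabilizer H (r 2))) :=
    ⟨r 0, r 1, r 2, fun x => by simpa [Fin.exists_iff_succ] using hcover x, h₀, h₁, rfl⟩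
  rcases h₂ with ⟨hm, hN⟩ | ⟨hm, hN⟩ | ⟨hm, hN⟩ <;> rw [hm] at hsig <;> simp [hsig, hN]

end Signature

lemma eq_bot_of_normal_of_le_stabilizer (h : HasTwoFixedPoints H P) {K : Subgroup H} [K.Normal]
    {x : P} (hx : 2 < (orbit H x).ncard) (hK : K ≤ stabilizer H x) : K = ⊥ := by
  refine (Subgroup.eq_bot_iff_forall K).mpr fun k hk => h.eq_one_of_forall_mem_smul_eq hx ?_
  rintro _ ⟨g, rfl⟩
  have hfix : g⁻¹ * k * g ∈ stabilizer H x := hK (by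
    simpa using Subgroup.Normal.conj_mem inferInstance k hk g⁻¹)
  simpa [mul_smul, inv_smul_eq_iff] using hfix

-- A group of prime order is cyclic, so it fixes the points fixed by a generator.
lemma not_prime_card_of_normal (h : HasTwoFixedPoints H P) (horb : ∀ x : P, 2 < (orbit H x).ncard)
    (K : Subgroup H) [K.Normal] : ¬ (Nat.card K).Prime := by
  intro hp
  have := Fact.mk hp
  have : Finite K := Nat.finite_of_card_ne_zero hp.ne_zero
  have hne : K ≠ ⊥ := fun hbot => hp.ne_one (Subgroup.card_eq_one.mpr hbot)
  obtain ⟨⟨k, hk⟩, hk1⟩ := (Subgroup.ne_bot_iff_exists_ne_one (H := K)).mp hne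
  obtain ⟨x, hx⟩ := h.exists_smul_eq (g := k) fun h1 => hk1 (Subtype.ext h1)
  refine hne (h.eq_bot_of_normal_of_le_stabilizer (horb x) fun g hg => ?_)
  obtain ⟨n, hn⟩ := Subgroup.mem_zpowers_iff.mp (mem_zpowers_of_prime_card rfl hk1 (g' := ⟨g, hg⟩))
  rw [← show k ^ n = g from congrArg Subtype.val hn]
  exact zpow_mem (show k ∈ stabilizer H x from hx) n

lemma nonempty_mulEquiv_alternatingGroup_four (h : HasTwoFixedPoints H P)
    (hsig : HasOrbitSignature H P 2 3 3) (hH : Nat.card H = 12) :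
    Nonempty (H ≃* alternatingGroup (Fin 4)) := by
  obtain ⟨-, b, -, -, -, hb, -⟩ := hsig
  have horbit : (orbit H b).ncard = 4 := by
    have := ncard_orbit_mul_card_stabilizer (H := H) b
    rw [hb, hH] at this
    omega
  have : Finite (orbit H b) := Set.finite_of_ncard_ne_zero (by omega)
  refine nonempty_mulEquiv_alternatingGroup_of_two_mul_card_eq_factorial (X := orbit H b)
    (by decide) horbit ((injective_iff_map_eq_one _).mpr fun g hg => ?_) (by rw [hH]; rfl)
  exact h.eq_one_of_forall_mem_smul_eq (s := orbit H b) (by omega) fun x hx =>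
    congrArg Subtype.val (Equiv.ext_iff.mp hg ⟨x, hx⟩)

lemma card_sylow_three_eq_four (h : HasTwoFixedPoints H P)
    (horb : ∀ x : P, 2 < (orbit H x).ncard) (hH : Nat.card H = 24) :
    Nat.card (Sylow 3 H) = 4 := by
  have : Finite H := Nat.finite_of_card_ne_zero (by omega)
  have : Fact (Nat.Prime 3) := ⟨Nat.prime_three⟩
  obtain ⟨Q⟩ : Nonempty (Sylow 3 H) := inferInstance
  have hQ : Nat.card (Q : Subgroup H) = 3 :=
    card_sylow_eq_pow (k := 1) (m := 8) hH (by decide) Q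
  have hne : Nat.card (Sylow 3 H) ≠ 1 := fun h1 => by
    have := (Nat.card_eq_one_iff_unique.mp h1).1
    exact h.not_prime_card_of_normal horb (Q : Subgroup H) (by rw [hQ]; exact Nat.prime_three)
  have hindex : (Q : Subgroup H).index = 8 := by
    have hmul := (Q : Subgroup H).index_mul_card
    rw [hQ, hH] at hmul
    omega
  have hmod : Nat.card (Sylow 3 H) % 3 = 1 := card_sylow_modEq_one 3 H
  have hdvd : Nat.card (Sylow 3 H) ∣ 8 := hindex ▸ Q.card_dvd_index
  have hle := Nat.le_of_dvd (by decide) hdvd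
  generalize Nat.card (Sylow 3 H) = n at *
  interval_cases n <;> omega

lemma nonempty_mulEquiv_perm_four (h : HasTwoFixedPoints H P)
    (horb : ∀ x : P, 2 < (orbit H x).ncard) (hH : Nat.card H = 24) :
    Nonempty (H ≃* Equiv.Perm (Fin 4)) := by
  have : Finite H := Nat.finite_of_card_ne_zero (by omega)
  have : Fact (Nat.Prime 3) := ⟨Nat.prime_three⟩
  have hfour := h.card_sylow_three_eq_four horb hH
  refine nonempty_mulEquiv_perm_of_card_eq_factorial hfour ?_ hH
  rw [← MonoidHom.ker_eq_bot_iff, ← Subgroup.card_eq_one]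
  have hdvd : 4 * Nat.card (toPermHom H (Sylow 3 H)).ker ∣ 4 * 6 := by
    simpa [hfour, hH] using card_sylow_mul_card_ker_dvd (H := H) (p := 3)
  have hthree : ¬ 3 ∣ Nat.card (toPermHom H (Sylow 3 H)).ker :=
    not_dvd_card_ker_of_card_sylow_eq_prime
      (card_sylow_eq_pow (k := 1) (m := 8) hH (by decide)) (by omega)
  have htwo : Nat.card (toPermHom H (Sylow 3 H)).ker ≠ 2 := fun h2 =>
    h.not_prime_card_of_normal horb _ (h2 ▸ Nat.prime_two)
  replace hdvd := Nat.dvd_of_mul_dvd_mul_left (by decide) hdvd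
  have hle := Nat.le_of_dvd (by decide) hdvd
  generalize Nat.card (toPermHom H (Sylow 3 H)).ker = n at *
  interval_cases n <;> omega

end HasTwoFixedPoints

lemma orderOf_eq_card_stabilizer {H P : Type*} [Group H] [MulAction H P] {g : H} {x : P}
    (hp : (Nat.card (stabilizer H x)).Prime) (hg : g ≠ 1) (hx : g • x = x) :
    orderOf g = Nat.card (stabilizer H x) := by
  have hdvd : orderOf g ∣ Nat.card (stabilizer H x) :=
    (stabilizer H x).orderOf_dvd_natCard hx
  exact ((Nat.dvd_prime hp).mp hdvd).resolve_left fun h => hg (orderOf_eq_one_iff.mp h)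

namespace HasOrbitSignature

variable {H P : Type*} [Group H] [MulAction H P] {k l m : ℕ}

lemma card_stabilizer (hsig : HasOrbitSignature H P k l m) (x : P) :
    Nat.card (stabilizer H x) = k ∨ Nat.card (stabilizer H x) = l ∨
      Nat.card (stabilizer H x) = m := by
  obtain ⟨a, b, c, hcover, rfl, rfl, rfl⟩ := hsig
  exact (hcover x).imp card_stabilizer_eq_of_mem_orbit
    (Or.imp card_stabilizer_eq_of_mem_orbit card_stabilizer_eq_of_mem_orbit)

lemma mem_orbit_of_card_stabilizer_eq (hsig : HasOrbitSignature H P k l m) (hkl : k ≠ l)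
    (hkm : k ≠ m) (hlm : l ≠ m) {x y : P}
    (hxy : Nat.card (stabilizer H x) = Nat.card (stabilizer H y)) : y ∈ orbit H x := by
  obtain ⟨a, b, c, hcover, rfl, rfl, rfl⟩ := hsig
  have hsame {z : P} (hx : x ∈ orbit H z) (hy : y ∈ orbit H z) : y ∈ orbit H x := by
    rwa [orbit_eq_iff.mpr hx]
  rcases hcover x with hx | hx | hx <;> rcases hcover y with hy | hy | hy <;>
    first
    | exact hsame hx hy
    | have := card_stabilizer_eq_of_mem_orbit hx
      have := card_stabilizer_eq_of_mem_orbit hy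
      omega

lemma prime_card_stabilizer (hsig : HasOrbitSignature H P k l m) (hk : k.Prime) (hl : l.Prime)
    (hm : m.Prime) (x : P) : (Nat.card (stabilizer H x)).Prime := by
  rcases hsig.card_stabilizer x with h | h | h <;> rwa [h]

end HasOrbitSignature

lemma ncard_coe_sdiff_one {H : Type*} [Group H] (K : Subgroup H) :
    ((K : Set H) \ {1}).ncard = Nat.card K - 1 := by
  rw [Set.ncard_sdiff_singleton_of_mem K.one_mem, ← Nat.card_coe_set_eq]
  rfl

/-- The nontrivial elements of `H` fixing some point of the orbit of `x`. If `P` consists of the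
poles of a rotation group, these are the rotations about the axes equivalent to the one through
`x`. -/
def rotationsAbout (H : Type*) {P : Type*} [Group H] [MulAction H P] (x : P) : Set H :=
  {g | g ≠ 1 ∧ ∃ y ∈ orbit H x, g • y = y}

lemma rotationsAbout_subset_of_stabilizer_le {H P : Type*} [Group H] [MulAction H P] {x : P}
    {K : Subgroup H} [K.Normal] (hK : stabilizer H x ≤ K) : rotationsAbout H x ⊆ K \ {1} := by
  rintro g ⟨hg, _, ⟨c, rfl⟩, hfix⟩
  have hmem : c⁻¹ * g * c ∈ K := hK (by
    rw [mem_stabilizer_iff, mul_smul, mul_smul, inv_smul_eq_iff]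
    exact hfix)
  refine ⟨?_, hg⟩
  simpa [mul_assoc] using Subgroup.Normal.conj_mem inferInstance _ hmem c

lemma HasTwoFixedPoints.two_mul_ncard_rotationsAbout {H P : Type*} [Group H] [Finite H]
    [MulAction H P] (h : HasTwoFixedPoints H P) (x : P)
    (hfix : ∀ g ∈ rotationsAbout H x, fixedBy P g ⊆ orbit H x) :
    (rotationsAbout H x).ncard * 2 = (orbit H x).ncard * (Nat.card (stabilizer H x) - 1) := by
  classical
  have : Finite (orbit H x) := Set.finite_range _
  rw [Set.ncard_eq_toFinset_card _ (Set.toFinite (rotationsAbout H x)),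
    Set.ncard_eq_toFinset_card _ (Set.toFinite (orbit H x))]
  refine Finset.card_mul_eq_card_mul (fun (g : H) (y : P) => g • y = y) (fun g hg => ?_)
    fun y hy => ?_
  · rw [Set.Finite.mem_toFinset] at hg
    rw [← h g hg.1, ← Set.ncard_coe_finset]
    congr 1
    ext y
    simpa using fun hy => hfix g hg hy
  · rw [Set.Finite.mem_toFinset] at hy
    rw [← card_stabilizer_eq_of_mem_orbit hy, ← ncard_coe_sdiff_one, ← Set.ncard_coe_finset]
    congr 1
    ext g
    simp only [Finset.mem_bipartiteBelow, Set.Finite.mem_toFinset, rotationsAbout,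
      Set.mem_ofPred_eq, Set.mem_sdiff, SetLike.mem_coe, mem_stabilizer_iff, Set.mem_singleton_iff]
    exact ⟨fun hg => ⟨hg.2, hg.1.1⟩, fun hg => ⟨⟨hg.2, y, hy, hg.1⟩, hg.1⟩⟩

lemma card_centralizer_le_two_mul_card_stabilizer {H P : Type*} [Group H] [Finite H]
    [MulAction H P] (h : HasTwoFixedPoints H P) {g : H} {x : P} (hg : g ≠ 1) (hx : g • x = x) :
    Nat.card (Subgroup.centralizer {g}) ≤ 2 * Nat.card (stabilizer H x) := by
  let C := Subgroup.centralizer ({g} : Set H)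
  have horbit : (orbit C x).ncard ≤ 2 := by
    rw [← h g hg]
    refine Set.ncard_le_ncard ?_ (h.finite_fixedBy hg)
    rintro _ ⟨⟨c, hc⟩, rfl⟩
    have hcomm : c * g = g * c := Subgroup.mem_centralizer_singleton_iff.mp hc
    change g • c • x = c • x
    rw [smul_smul, ← hcomm, mul_smul, hx]
  have hstab : Nat.card (stabilizer C x) ≤ Nat.card (stabilizer H x) :=
    Nat.card_le_card_of_injective (fun c => (⟨c.1.1, c.2⟩ : stabilizer H x)) fun c d hcd =>
      Subtype.ext (Subtype.ext (congrArg (fun s : stabilizer H x => (s : H)) hcd))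
  rw [← ncard_orbit_mul_card_stabilizer (H := C) x]
  exact Nat.mul_le_mul horbit hstab

section Icosahedral

variable {H P : Type*} [Group H] [MulAction H P]

namespace HasOrbitSignature

lemma orderOf_eq_two_of_mem_sylow (hsig : HasOrbitSignature H P 2 3 5)
    (h : HasTwoFixedPoints H P) (Q : Sylow 2 H) {g : H} (hgQ : g ∈ Q) (hg : g ≠ 1) :
    orderOf g = 2 := by
  have : Fact (Nat.Prime 2) := ⟨Nat.prime_two⟩
  obtain ⟨x, hx⟩ := h.exists_smul_eq hg
  have hprime : (orderOf g).Prime := by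
    have := hsig.prime_card_stabilizer Nat.prime_two Nat.prime_three Nat.prime_five x
    rwa [orderOf_eq_card_stabilizer this hg hx]
  obtain ⟨n, hn⟩ := IsPGroup.iff_orderOf.mp Q.isPGroup' ⟨g, hgQ⟩
  rw [Subgroup.orderOf_mk] at hn
  exact (Nat.prime_dvd_prime_iff_eq hprime Nat.prime_two).mp
    (hprime.dvd_of_dvd_pow (dvd_of_eq hn))

variable [Finite H]

lemma two_mul_ncard_rotationsAbout (hsig : HasOrbitSignature H P 2 3 5)
    (h : HasTwoFixedPoints H P) (x : P) :
    (rotationsAbout H x).ncard * 2 = (orbit H x).ncard * (Nat.card (stabilizer H x) - 1) := by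
  have hprime := hsig.prime_card_stabilizer Nat.prime_two Nat.prime_three Nat.prime_five
  refine h.two_mul_ncard_rotationsAbout x ?_
  rintro g ⟨hg, y, hy, hgy⟩ z hgz
  rw [← orbit_eq_iff.mpr hy]
  refine hsig.mem_orbit_of_card_stabilizer_eq (by decide) (by decide) (by decide) ?_
  rw [← orderOf_eq_card_stabilizer (hprime y) hg hgy, orderOf_eq_card_stabilizer (hprime z) hg hgz]

lemma sixteen_le_card_of_normal (hsig : HasOrbitSignature H P 2 3 5) (h : HasTwoFixedPoints H P)
    (hH : Nat.card H = 60) {K : Subgroup H} [K.Normal] (hK : K ≠ ⊥) : 16 ≤ Nat.card K := by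
  obtain ⟨⟨k, hkK⟩, hk⟩ := (Subgroup.ne_bot_iff_exists_ne_one (H := K)).mp hK
  replace hk : k ≠ 1 := fun h1 => hk (Subtype.ext h1)
  obtain ⟨x, hx⟩ := h.exists_smul_eq hk
  have hprime := hsig.prime_card_stabilizer Nat.prime_two Nat.prime_three Nat.prime_five x
  have hzpowers : Subgroup.zpowers k = stabilizer H x :=
    Subgroup.eq_of_le_of_card_ge (Subgroup.zpowers_le.mpr hx)
      (by rw [Nat.card_zpowers, orderOf_eq_card_stabilizer hprime hk hx])
  have hsubset : rotationsAbout H x ⊆ K \ {1} :=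
    rotationsAbout_subset_of_stabilizer_le (hzpowers ▸ Subgroup.zpowers_le.mpr hkK)
  have hle := Set.ncard_le_ncard hsubset (Set.toFinite _)
  rw [ncard_coe_sdiff_one] at hle
  have hcount := hsig.two_mul_ncard_rotationsAbout h x
  have horbit := ncard_orbit_mul_card_stabilizer (H := H) x
  rcases hsig.card_stabilizer x with hs | hs | hs <;> rw [hs] at hcount horbit <;> omega

lemma ncard_involutions (hsig : HasOrbitSignature H P 2 3 5) (h : HasTwoFixedPoints H P)
    (hH : Nat.card H = 60) : {g : H | orderOf g = 2}.ncard = 15 := by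
  have hprime := hsig.prime_card_stabilizer Nat.prime_two Nat.prime_three Nat.prime_five
  obtain ⟨a, ha⟩ : ∃ a : P, Nat.card (stabilizer H a) = 2 := by
    obtain ⟨a, -, -, -, ha, -⟩ := hsig
    exact ⟨a, ha⟩
  have heq : {g : H | orderOf g = 2} = rotationsAbout H a := by
    ext g
    constructor
    · rintro (hg : orderOf g = 2)
      have hg1 : g ≠ 1 := by rintro rfl; simp at hg
      obtain ⟨x, hx⟩ := h.exists_smul_eq hg1
      refine ⟨hg1, x, ?_, hx⟩
      refine hsig.mem_orbit_of_card_stabilizer_eq (by decide) (by decide) (by decide) ?_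
      rw [ha, ← orderOf_eq_card_stabilizer (hprime x) hg1 hx, hg]
    · rintro ⟨hg, y, hy, hgy⟩
      change orderOf g = 2
      rw [orderOf_eq_card_stabilizer (hprime y) hg hgy, card_stabilizer_eq_of_mem_orbit hy, ha]
  have hcount := hsig.two_mul_ncard_rotationsAbout h a
  have horbit := ncard_orbit_mul_card_stabilizer (H := H) a
  rw [← heq, ha] at hcount
  rw [ha, hH] at horbit
  omega

lemma sylow_two_eq_centralizer (hsig : HasOrbitSignature H P 2 3 5) (h : HasTwoFixedPoints H P)
    (hH : Nat.card H = 60) (Q : Sylow 2 H) {g : H} (hgQ : g ∈ Q) (hg : g ≠ 1) :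
    (Q : Subgroup H) = Subgroup.centralizer {g} := by
  have : Fact (Nat.Prime 2) := ⟨Nat.prime_two⟩
  have hQ : Nat.card (Q : Subgroup H) = 2 ^ 2 := card_sylow_eq_pow (m := 15) hH (by decide) Q
  have hcomm := IsPGroup.isMulCommutative_of_card_eq_prime_sq hQ
  obtain ⟨x, hx⟩ := h.exists_smul_eq hg
  have hprime := hsig.prime_card_stabilizer Nat.prime_two Nat.prime_three Nat.prime_five x
  refine Subgroup.eq_of_le_of_card_ge (fun q hq => ?_) ?_
  · rw [Subgroup.mem_centralizer_singleton_iff]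
    exact congrArg Subtype.val (mul_comm' (⟨q, hq⟩ : (Q : Subgroup H)) ⟨g, hgQ⟩)
  · have hstab : Nat.card (stabilizer H x) = 2 := by
      rw [← orderOf_eq_card_stabilizer hprime hg hx,
        hsig.orderOf_eq_two_of_mem_sylow h Q hgQ hg]
    rw [hQ, sq]
    simpa only [hstab] using card_centralizer_le_two_mul_card_stabilizer h hg hx

-- The Sylow 2-subgroups are Klein four-groups, and each of the 15 involutions lies in just one.
lemma card_sylow_two_eq_five (hsig : HasOrbitSignature H P 2 3 5) (h : HasTwoFixedPoints H P)
    (hH : Nat.card H = 60) : Nat.card (Sylow 2 H) = 5 := by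
  classical
  have : Fact (Nat.Prime 2) := ⟨Nat.prime_two⟩
  have := Fintype.ofFinite (Sylow 2 H)
  have hinv := hsig.ncard_involutions h hH
  rw [Set.ncard_eq_toFinset_card _ (Set.toFinite _)] at hinv
  have hcount := Finset.card_mul_eq_card_mul (s := (Set.toFinite {g : H | orderOf g = 2}).toFinset)
    (t := (Finset.univ : Finset (Sylow 2 H))) (fun g Q => g ∈ Q) (m := 1) (n := 3)
    (fun g hg => ?_) fun Q _ => ?_
  · rw [hinv, Finset.card_univ, ← Nat.card_eq_fintype_card] at hcount
    omega
  · have hg2 : orderOf g = 2 := by simpa using hg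
    have hg1 : g ≠ 1 := by rintro rfl; simp at hg2
    obtain ⟨Q, hQ⟩ := (IsPGroup.of_card (p := 2) (n := 1) (G := Subgroup.zpowers g)
      (by rw [Nat.card_zpowers, hg2, pow_one])).exists_le_sylow
    rw [Subgroup.zpowers_le] at hQ
    refine Finset.card_eq_one.mpr ⟨Q, Finset.ext fun R => ?_⟩
    simp only [Finset.mem_bipartiteAbove, Finset.mem_univ, true_and, Finset.mem_singleton]
    refine ⟨fun hR => Sylow.ext ?_, fun hR => hR ▸ hQ⟩
    rw [hsig.sylow_two_eq_centralizer h hH R hR hg1, hsig.sylow_two_eq_centralizer h hH Q hQ hg1]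
  · have hQ : ((Q : Set H) \ {1}).ncard = 3 := by
      rw [← Sylow.coe_coe, ncard_coe_sdiff_one,
        card_sylow_eq_pow (k := 2) (m := 15) hH (by decide) Q]
      rfl
    rw [← hQ, ← Set.ncard_coe_finset]
    congr 1
    ext g
    simp only [Finset.mem_bipartiteBelow, Set.Finite.mem_toFinset,
      Set.mem_ofPred_eq, Set.mem_sdiff, SetLike.mem_coe, Set.mem_singleton_iff]
    exact ⟨fun hg => ⟨hg.2, by rintro rfl; simp at hg⟩,
      fun hg => ⟨hsig.orderOf_eq_two_of_mem_sylow h Q hg.1 hg.2, hg.1⟩⟩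

end HasOrbitSignature

lemma HasTwoFixedPoints.nonempty_mulEquiv_alternatingGroup_five [Finite H]
    (h : HasTwoFixedPoints H P)
    (hsig : HasOrbitSignature H P 2 3 5) (hH : Nat.card H = 60) :
    Nonempty (H ≃* alternatingGroup (Fin 5)) := by
  have : Fact (Nat.Prime 2) := ⟨Nat.prime_two⟩
  have hfive := hsig.card_sylow_two_eq_five h hH
  refine nonempty_mulEquiv_alternatingGroup_of_two_mul_card_eq_factorial (by decide) hfive ?_
    (by rw [hH]; rfl)
  rw [← MonoidHom.ker_eq_bot_iff]
  by_contra hne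
  have hlarge := hsig.sixteen_le_card_of_normal h hH hne
  have hdvd := card_sylow_mul_card_ker_dvd (H := H) (p := 2)
  rw [hfive, hH] at hdvd
  have hle := Nat.le_of_dvd (by decide) hdvd
  omega

end Icosahedral

lemma HasTwoFixedPoints.finite {H P : Type*} [Group H] [Finite H] [MulAction H P]
    (h : HasTwoFixedPoints H P) (hfix : ∀ x : P, ∃ g : H, g ≠ 1 ∧ g • x = x) : Finite P := by
  rw [← Set.finite_univ_iff]
  refine (Set.finite_iUnion fun g : {g : H // g ≠ 1} => h.finite_fixedBy g.2).subset fun x _ => ?_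
  obtain ⟨g, hg, hgx⟩ := hfix x
  exact Set.mem_iUnion.mpr ⟨⟨g, hg⟩, hgx⟩

theorem HasTwoFixedPoints.isPolyhedral {H P : Type*} [Group H] [Finite H] [Nontrivial H]
    [MulAction H P] (h : HasTwoFixedPoints H P) (hfix : ∀ x : P, ∃ g : H, g ≠ 1 ∧ g • x = x)
    (horb : ∀ x : P, 2 < (orbit H x).ncard) : IsPolyhedral H := by
  have : Finite P := h.finite hfix
  have hstab (x : P) : 2 ≤ Nat.card (stabilizer H x) := by
    obtain ⟨g, hg, hgx⟩ := hfix x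
    rw [Nat.succ_le_iff, Subgroup.one_lt_card_iff_ne_bot, Subgroup.ne_bot_iff_exists_ne_one]
    exact ⟨⟨g, hgx⟩, Subtype.coe_ne_coe.mp hg⟩
  rcases h.orbitSignature hstab horb with ⟨hsig, hH⟩ | ⟨-, hH⟩ | ⟨hsig, hH⟩
  · exact .inl (h.nonempty_mulEquiv_alternatingGroup_four hsig hH)
  · exact .inr (.inl (h.nonempty_mulEquiv_perm_four horb hH))
  · exact .inr (.inr (h.nonempty_mulEquiv_alternatingGroup_five hsig hH))

section Rotations

open Module

variable {K V : Type*} [Field K] [AddCommGroup V] [Module K V]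

lemma apply_eq_self_of_apply_sub_eq_sub {g : V ≃ₗ[K] V} (hord : (orderOf g : K) ≠ 0) {u : V}
    (hu : g (g u - u) = g u - u) : g u = u := by
  have hpow (n : ℕ) : (g ^ n) u = u + (n : K) • (g u - u) := by
    induction n with
    | zero => simp
    | succ n ih =>
      rw [pow_succ', LinearEquiv.mul_apply, ih, map_add, map_smul, hu, Nat.cast_succ, add_smul,
        one_smul]
      abel
  have h := hpow (orderOf g)
  rw [pow_orderOf_eq_one, LinearEquiv.coe_one, id_eq, left_eq_add, smul_eq_zero_iff_right hord] at h
  exact sub_eq_zero.mp h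

variable [FiniteDimensional K V]

lemma eq_one_of_det_eq_one_of_finrank_quotient_le_one {g : V ≃ₗ[K] V}
    (hord : (orderOf g : K) ≠ 0) (hdet : LinearMap.det (g : V →ₗ[K] V) = 1)
    (hfix : finrank K (V ⧸ g.fixedSubmodule) ≤ 1) : g = 1 := by
  obtain ⟨φ, v, hg⟩ := LinearEquiv.mem_dilatransvections_iff_finrank_quotient.mpr hfix
  have hφv : φ v = 0 := by rwa [hg, LinearMap.transvection.det, add_eq_left] at hdet
  have happly (u : V) : g u = u + φ u • v := by
    rw [← LinearMap.transvection.apply, ← hg, LinearEquiv.coe_coe]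
  refine LinearEquiv.ext fun u => apply_eq_self_of_apply_sub_eq_sub hord ?_
  rw [happly u, add_sub_cancel_left, happly, map_smul, hφv, smul_zero, zero_smul, add_zero]

lemma det_mul_det_eq_of_forall_bilin_eq {B : LinearMap.BilinForm K V} (hB : B.Nondegenerate)
    {l r l' r' : V →ₗ[K] V} {c : K} (h : ∀ v w, B (l v) (r w) = c * B (l' v) (r' w)) :
    l.det * r.det = c ^ finrank K V * (l'.det * r'.det) := by
  have hcomp : B.comp l r = c • B.comp l' r' := LinearMap.ext₂ h
  let b := finBasis K V
  have hMdet := (LinearMap.BilinForm.nondegenerate_iff_det_ne_zero b).mp hB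
  have hdet := congrArg (fun C => (LinearMap.BilinForm.toMatrix b C).det) hcomp
  simp only [map_smul, LinearMap.BilinForm.toMatrix_comp b b, det_smul, det_mul, det_transpose,
    LinearMap.det_toMatrix, Fintype.card_fin] at hdet
  exact mul_right_cancel₀ hMdet (by linear_combination hdet)

/-- `g` is a rotation for `B`: an isometry of determinant `1`. -/
structure IsRotation (B : LinearMap.BilinForm K V) (g : V ≃ₗ[K] V) : Prop where
  det_eq_one : LinearMap.det (g : V →ₗ[K] V) = 1
  bilin_apply : ∀ v w, B (g v) (g w) = B v w

namespace IsRotation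

variable {B : LinearMap.BilinForm K V} {g : V ≃ₗ[K] V}

lemma fixedSubmodule_ne_bot [NeZero (2 : K)] (hg : IsRotation B g) (hB : B.Nondegenerate)
    (hodd : Odd (finrank K V)) : LinearMap.fixedSubmodule (g : V →ₗ[K] V) ≠ ⊥ := by
  let δ : V →ₗ[K] V := (g : V →ₗ[K] V) - LinearMap.id
  have hδ : δ.det * (g : V →ₗ[K] V).det = (-1) ^ finrank K V * ((LinearMap.id).det * δ.det) :=
    det_mul_det_eq_of_forall_bilin_eq hB fun v w => by simp [δ, hg.bilin_apply]
  rw [hg.det_eq_one, LinearMap.det_id, hodd.neg_one_pow] at hδ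
  have hdet : δ.det = 0 := by
    refine (mul_eq_zero_iff_left (NeZero.ne (2 : K))).mp ?_
    linear_combination hδ
  rw [LinearMap.fixedSubmodule_eq_ker]
  exact (LinearMap.bot_lt_ker_of_det_eq_zero hdet).ne'

lemma finrank_fixedSubmodule_eq_one [NeZero (2 : K)] (hg : IsRotation B g)
    (hB : B.Nondegenerate) (hV : finrank K V = 3) (hord : (orderOf g : K) ≠ 0) (hg1 : g ≠ 1) :
    finrank K (LinearMap.fixedSubmodule (g : V →ₗ[K] V)) = 1 := by
  have hpos : finrank K (LinearMap.fixedSubmodule (g : V →ₗ[K] V)) ≠ 0 := fun h =>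
    hg.fixedSubmodule_ne_bot hB (hV ▸ by decide) (Submodule.finrank_eq_zero.mp h)
  have hquot : 1 < finrank K (V ⧸ LinearMap.fixedSubmodule (g : V →ₗ[K] V)) := not_le.mp fun h =>
    hg1 (eq_one_of_det_eq_one_of_finrank_quotient_le_one hord hg.det_eq_one h)
  have := Submodule.finrank_quotient_add_finrank (LinearMap.fixedSubmodule (g : V →ₗ[K] V))
  lia

-- The fixed space of `g` is complementary and orthogonal to the range of `g - 1`.
lemma eq_zero_of_forall_fixed_bilin_eq_zero (hg : IsRotation B g) (hB : B.Nondegenerate)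
    (hord : (orderOf g : K) ≠ 0) {v : V} (hv : g v = v)
    (hort : ∀ w, g w = w → B v w = 0) : v = 0 := by
  let δ : V →ₗ[K] V := (g : V →ₗ[K] V) - LinearMap.id
  have hdisj : Disjoint (LinearMap.ker δ) (LinearMap.range δ) := by
    rw [Submodule.disjoint_def]
    rintro _ hker ⟨u, rfl⟩
    exact sub_eq_zero.mpr (apply_eq_self_of_apply_sub_eq_sub hord (sub_eq_zero.mp hker))
  have htop : LinearMap.ker δ ⊔ LinearMap.range δ = ⊤ :=
    Submodule.eq_top_of_disjoint _ _
      (by rw [add_comm, LinearMap.finrank_range_add_finrank_ker]) hdisj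
  refine hB.1 v fun x => ?_
  obtain ⟨w, hw, _, ⟨u, rfl⟩, rfl⟩ := Submodule.mem_sup.mp (htop ▸ Submodule.mem_top (x := x))
  have hBδ : B v (δ u) = 0 := by
    simpa only [hv, δ, LinearMap.sub_apply, LinearEquiv.coe_coe, LinearMap.id_apply, map_sub,
      sub_eq_zero] using hg.bilin_apply v u
  rw [map_add, hBδ, hort w (sub_eq_zero.mp hw), add_zero]

end IsRotation

lemma ncard_unit_vectors_of_finrank_eq_one [IsAlgClosed K] [NeZero (2 : K)]
    (B : LinearMap.BilinForm K V) {W : Submodule K V} (hW : finrank K W = 1)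
    (hB : ∀ v ∈ W, (∀ w ∈ W, B v w = 0) → v = 0) : {v | B v v = 1 ∧ v ∈ W}.ncard = 2 := by
  obtain ⟨⟨v, hvW⟩, hv0, hspan⟩ := finrank_eq_one_iff'.mp hW
  replace hv0 : v ≠ 0 := fun h => hv0 (Subtype.ext h)
  replace hspan : ∀ w ∈ W, ∃ c : K, c • v = w := fun w hw =>
    (hspan ⟨w, hw⟩).imp fun _ hc => congrArg Subtype.val hc
  have hvv : B v v ≠ 0 := fun h => hv0 <| hB v hvW fun w hw => by
    obtain ⟨c, rfl⟩ := hspan w hw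
    rw [map_smul, h, smul_zero]
  obtain ⟨s, hs⟩ := IsAlgClosed.exists_pow_nat_eq (B v v)⁻¹ two_pos
  have hunit (c : K) : B (c • v) (c • v) = 1 ↔ c = s ∨ c = -s := by
    rw [← sq_eq_sq_iff_eq_or_eq_neg, hs, map_smul, map_smul, LinearMap.smul_apply, smul_eq_mul,
      smul_eq_mul, ← mul_assoc, ← sq, mul_eq_one_iff_eq_inv₀ hvv]
  have hne : s • v ≠ -s • v := by
    rw [Ne, (smul_left_injective K hv0).eq_iff, eq_neg_iff_add_eq_zero, ← two_mul, mul_eq_zero]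
    rintro (h | rfl)
    · exact NeZero.ne 2 h
    · exact inv_ne_zero hvv (by rw [← hs, zero_pow two_ne_zero])
  rw [← Set.ncard_pair hne]
  congr 1 with w
  simp only [Set.mem_ofPred_eq, Set.mem_insert_iff, Set.mem_singleton_iff]
  constructor
  · rintro ⟨hw, hwW⟩
    obtain ⟨c, rfl⟩ := hspan w hwW
    exact ((hunit c).mp hw).imp (congrArg (· • v)) (congrArg (· • v))
  · rintro (rfl | rfl)
    · exact ⟨(hunit s).mpr (.inl rfl), W.smul_mem _ hvW⟩
    · exact ⟨(hunit (-s)).mpr (.inr rfl), W.smul_mem _ hvW⟩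

end Rotations

section PolyhedralRotationGroups

open Module

variable {K V : Type*} [Field K] [AddCommGroup V] [Module K V]

/-- `H` has no invariant linear subspaces other than `0` and the whole space. -/
def ActsIrreducibly (H : Subgroup (V ≃ₗ[K] V)) : Prop :=
  ∀ W : Submodule K V, (∀ g ∈ H, ∀ v ∈ W, g v ∈ W) → W = ⊥ ∨ W = ⊤

namespace ActsIrreducibly

variable {H : Subgroup (V ≃ₗ[K] V)}

lemma exists_apply_notMem_span_singleton (hH : ActsIrreducibly H) (hV : 1 < finrank K V) {v : V}
    (hv : v ≠ 0) : ∃ g ∈ H, g v ∉ Submodule.span K {v} := by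
  by_contra! hinv
  have hspan : ∀ g ∈ H, ∀ w ∈ Submodule.span K {v}, g w ∈ Submodule.span K {v} := by
    intro g hg w hw
    obtain ⟨c, rfl⟩ := Submodule.mem_span_singleton.mp hw
    rw [map_smul]
    exact Submodule.smul_mem _ c (hinv g hg)
  rcases hH _ hspan with hbot | htop
  · exact hv (Submodule.span_singleton_eq_bot.mp hbot)
  · rw [← finrank_top, ← htop, finrank_span_singleton hv] at hV
    exact lt_irrefl 1 hV

-- If the orbit were `{v, g v}`, the line spanned by `v + g v` would be invariant.
lemma two_lt_ncard_orbit [Finite H] (hH : ActsIrreducibly H) (hV : 1 < finrank K V) {v : V}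
    (hv : v ≠ 0) : 2 < (orbit H v).ncard := by
  by_contra! hle
  obtain ⟨g, hg, hgv⟩ := hH.exists_apply_notMem_span_singleton hV hv
  have hne : v ≠ g v := fun h => hgv (h ▸ Submodule.mem_span_singleton_self v)
  have hpair : orbit H v = {v, g v} := by
    have hfin : (orbit H v).Finite := Finite.finite_mulAction_orbit v
    refine (Set.eq_of_subset_of_ncard_le ?_ ?_ hfin).symm
    · exact Set.pair_subset (mem_orbit_self v) (mem_orbit v (⟨g, hg⟩ : H))
    · rwa [Set.ncard_pair hne]
  by_cases hsum : v + g v = 0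
  · refine hgv ?_
    rw [← neg_eq_of_add_eq_zero_right hsum]
    exact neg_mem (Submodule.mem_span_singleton_self v)
  · obtain ⟨k, hk, hksum⟩ := hH.exists_apply_notMem_span_singleton hV hsum
    have hkv : k v ∈ ({v, g v} : Set V) := hpair ▸ mem_orbit v (⟨k, hk⟩ : H)
    have hkgv : k (g v) ∈ ({v, g v} : Set V) := hpair ▸ mem_orbit v (⟨k * g, mul_mem hk hg⟩ : H)
    have hkne : k v ≠ k (g v) := k.injective.ne hne
    refine hksum ?_
    suffices k v + k (g v) = v + g v by
      rw [map_add, this]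
      exact Submodule.mem_span_singleton_self _
    rcases hkv with hkv | hkv <;> rcases hkgv with hkgv | hkgv
    · exact absurd (hkv.trans hkgv.symm) hkne
    · rw [hkv, hkgv]
    · rw [hkv, hkgv, add_comm]
    · exact absurd (hkv.trans hkgv.symm) hkne

lemma nontrivial (hH : ActsIrreducibly H) (hV : 1 < finrank K V) : Nontrivial H := by
  have : Nontrivial V := nontrivial_of_finrank_pos (zero_lt_one.trans hV)
  obtain ⟨v, hv⟩ := exists_ne (0 : V)
  obtain ⟨g, hg, hgv⟩ := hH.exists_apply_notMem_span_singleton hV hv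
  refine ⟨⟨g, hg⟩, 1, fun h => hgv ?_⟩
  rw [Subgroup.mk_eq_one] at h
  exact h ▸ Submodule.mem_span_singleton_self v

end ActsIrreducibly

variable {B : LinearMap.BilinForm K V} {H : Subgroup (V ≃ₗ[K] V)}

/-- The poles of a group `H` of rotations for `B`: the unit vectors on the axes of its nontrivial
elements. -/
def poles (hH : ∀ g ∈ H, IsRotation B g) : SubMulAction H V where
  carrier := {v | B v v = 1 ∧ ∃ g ∈ H, g ≠ 1 ∧ g v = v}
  smul_mem' := by
    rintro ⟨k, hk⟩ v ⟨hv, g, hg, hg1, hgv⟩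
    refine ⟨((hH k hk).bilin_apply v v).trans hv, k * g * k⁻¹,
      mul_mem (mul_mem hk hg) (inv_mem hk), conj_eq_one_iff.not.mpr hg1, ?_⟩
    simp only [Subgroup.mk_smul, LinearEquiv.smul_def, LinearEquiv.mul_apply]
    rw [← LinearEquiv.mul_apply k⁻¹, inv_mul_cancel, LinearEquiv.coe_one, id_eq, hgv]

lemma image_val_fixedBy_poles (hH : ∀ g ∈ H, IsRotation B g) {g : H} (hg : g ≠ 1) :
    Subtype.val '' fixedBy (poles hH) g =
      {v | B v v = 1 ∧ v ∈ LinearMap.fixedSubmodule (g : V →ₗ[K] V)} := by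
  ext v
  constructor
  · rintro ⟨⟨v, hv, _⟩, hgv, rfl⟩
    exact ⟨hv, congrArg Subtype.val hgv⟩
  · rintro ⟨hv, hgv⟩
    exact ⟨⟨v, hv, g, g.2, by simpa using hg, hgv⟩, Subtype.ext hgv, rfl⟩

variable [FiniteDimensional K V] [IsAlgClosed K] [NeZero (2 : K)]

lemma hasTwoFixedPoints_poles (hH : ∀ g ∈ H, IsRotation B g) (hB : B.Nondegenerate)
    (hV : finrank K V = 3) (hcard : (Nat.card H : K) ≠ 0) : HasTwoFixedPoints H (poles hH) := by
  intro g hg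
  have hrot := hH g g.2
  have hord : (orderOf (g : V ≃ₗ[K] V) : K) ≠ 0 := fun h => hcard <| by
    obtain ⟨m, hm⟩ := Subgroup.orderOf_dvd_natCard H g.2
    rw [hm, Nat.cast_mul, h, zero_mul]
  rw [← Set.ncard_image_of_injective _ Subtype.val_injective, image_val_fixedBy_poles hH hg]
  exact ncard_unit_vectors_of_finrank_eq_one B
    (hrot.finrank_fixedSubmodule_eq_one hB hV hord (by simpa using hg))
    fun v hv => hrot.eq_zero_of_forall_fixed_bilin_eq_zero hB hord hv

theorem ActsIrreducibly.isPolyhedral (hirr : ActsIrreducibly H) (hH : ∀ g ∈ H, IsRotation B g)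
    (hB : B.Nondegenerate) (hV : finrank K V = 3) (hcard : (Nat.card H : K) ≠ 0) :
    IsPolyhedral H := by
  have hV1 : 1 < finrank K V := by lia
  have : Finite H := Nat.finite_of_card_ne_zero fun h => hcard (by rw [h, Nat.cast_zero])
  have : Nontrivial H := hirr.nontrivial hV1
  refine (hasTwoFixedPoints_poles hH hB hV hcard).isPolyhedral ?_ ?_
  · rintro ⟨v, hv, g, hg, hg1, hgv⟩
    exact ⟨⟨g, hg⟩, by simpa only [ne_eq, Subgroup.mk_eq_one] using hg1, Subtype.ext hgv⟩
  · intro x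
    have hx : (x : V) ≠ 0 := by
      intro h
      have := x.2.1
      simp [h] at this
    rw [← Set.ncard_image_of_injective _ Subtype.val_injective, SubMulAction.val_image_orbit]
    exact hirr.two_lt_ncard_orbit hV1 hx

end PolyhedralRotationGroups

section SemiInvariantForms

open Module

variable {G K V : Type*} [Group G] [Field K] [AddCommGroup V] [Module K V]

namespace ActsIrreducibly

variable {H : Subgroup (V ≃ₗ[K] V)}

lemma eq_zero_of_ker_invariant (hH : ActsIrreducibly H) (hV : 1 < finrank K V) {φ : Dual K V}
    (hφ : ∀ g ∈ H, ∀ v, φ v = 0 → φ (g v) = 0) : φ = 0 := by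
  rcases hH (LinearMap.ker φ) hφ with hbot | htop
  · have : FiniteDimensional K V := FiniteDimensional.of_finrank_pos (zero_lt_one.trans hV)
    have hle := LinearMap.finrank_le_finrank_of_injective (LinearMap.ker_eq_bot.mp hbot)
    rw [finrank_self] at hle
    exact absurd hle hV.not_ge
  · exact LinearMap.ker_eq_top.mp htop

lemma nondegenerate_of_semiinvariant (hH : ActsIrreducibly H) {B : LinearMap.BilinForm K V}
    (hrefl : B.IsRefl) (hB0 : B ≠ 0)
    (hB : ∀ g ∈ H, ∃ c : K, ∀ v w, B (g v) (g w) = c * B v w) : B.Nondegenerate := by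
  refine hrefl.nondegenerate_iff_separatingLeft.mpr
    (LinearMap.separatingLeft_iff_ker_eq_bot.mpr ?_)
  refine (hH (LinearMap.ker B) fun g hg v hv => LinearMap.ext fun w => ?_).resolve_right
    (LinearMap.ker_eq_top.not.mpr hB0)
  obtain ⟨c, hc⟩ := hB g hg
  rw [← g.apply_symm_apply w, hc, LinearMap.mem_ker.mp hv, LinearMap.zero_apply, mul_zero,
    LinearMap.zero_apply]

end ActsIrreducibly

/-- The twist of the representation `ρ` by the character `χ`. -/
def twist (χ : G →* Kˣ) (ρ : G →* (V ≃ₗ[K] V)) : G →* (V ≃ₗ[K] V) where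
  toFun g := χ g • ρ g
  map_one' := LinearEquiv.ext fun v => by
    rw [map_one, map_one]
    exact one_smul K v
  map_mul' g h := LinearEquiv.ext fun v => by
    simp only [map_mul, LinearEquiv.smul_apply, LinearEquiv.mul_apply, Units.val_mul, mul_smul,
      map_smul]
    exact smul_comm _ _ _

lemma twist_apply (χ : G →* Kˣ) (ρ : G →* (V ≃ₗ[K] V)) (g : G) (v : V) :
    twist χ ρ g v = (χ g : K) • ρ g v :=
  rfl

lemma ActsIrreducibly.twist {ρ : G →* (V ≃ₗ[K] V)} (hρ : ActsIrreducibly ρ.range)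
    (χ : G →* Kˣ) : ActsIrreducibly (twist χ ρ).range := by
  refine fun W hW => hρ W ?_
  rintro _ ⟨g, rfl⟩ v hv
  exact (W.smul_mem_iff (χ g).ne_zero).mp (hW _ ⟨g, rfl⟩ v hv)

variable {B : LinearMap.BilinForm K V} {ρ : G →* (V ≃ₗ[K] V)} {χ : G →* Kˣ}

lemma IsRotation.eq_one_of_smul [FiniteDimensional K V] {g : V ≃ₗ[K] V} (hg : IsRotation B g)
    (hB : B.Nondegenerate) (hodd : Odd (finrank K V)) {c : K} (hc : ∀ v, g v = c • v) : g = 1 := by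
  have : Nontrivial V := nontrivial_of_finrank_pos hodd.pos
  obtain ⟨v, hv⟩ := exists_ne (0 : V)
  obtain ⟨w, hw⟩ : ∃ w, B v w ≠ 0 := by
    by_contra! h
    exact hv (hB.1 v h)
  have hsq : c ^ 2 = 1 := by
    have h := hg.bilin_apply v w
    rw [hc, hc, map_smul, map_smul, LinearMap.smul_apply, smul_eq_mul, smul_eq_mul, ← mul_assoc,
      ← sq] at h
    exact (mul_eq_right₀ hw).mp h
  have hpow : c ^ finrank K V = 1 := by
    have hgc : (g : V →ₗ[K] V) = c • LinearMap.id := LinearMap.ext hc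
    rw [← hg.det_eq_one, hgc, LinearMap.det_smul, LinearMap.det_id, mul_one]
  obtain ⟨k, hk⟩ := hodd
  rw [hk, pow_succ, pow_mul, hsq, one_pow, one_mul] at hpow
  exact LinearEquiv.ext fun v => by rw [hc, hpow, one_smul, LinearEquiv.coe_one, id_eq]

-- Comparing determinants gives `χ ^ 3 = 1`, so that `χ` is a square root of `χ⁻¹`.
lemma isRotation_twist [FiniteDimensional K V] (hB : B.Nondegenerate) (hV : finrank K V = 3)
    (hdet : ∀ g, LinearMap.det (ρ g : V →ₗ[K] V) = 1)
    (hχ : ∀ g v w, B (ρ g v) (ρ g w) = χ g * B v w) (g : G) : IsRotation B (twist χ ρ g) := by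
  have hcube : (χ g : K) ^ 3 = 1 := by
    have h := det_mul_det_eq_of_forall_bilin_eq (l := (ρ g : V →ₗ[K] V)) (r := ρ g)
      (l' := LinearMap.id) (r' := LinearMap.id) hB (hχ g)
    simpa only [hdet, LinearMap.det_id, mul_one, hV] using h.symm
  constructor
  · have hg : (twist χ ρ g : V →ₗ[K] V) = (χ g : K) • (ρ g : V →ₗ[K] V) := rfl
    rw [hg, LinearMap.det_smul, hdet, hV, hcube, mul_one]
  · intro v w
    simp only [twist_apply, map_smul, LinearMap.smul_apply, smul_eq_mul, hχ]
    linear_combination B v w * hcube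

lemma twist_eq_one_iff_exists_smul [FiniteDimensional K V] (hB : B.Nondegenerate)
    (hV : finrank K V = 3) (hdet : ∀ g, LinearMap.det (ρ g : V →ₗ[K] V) = 1)
    (hχ : ∀ g v w, B (ρ g v) (ρ g w) = χ g * B v w) (g : G) :
    twist χ ρ g = 1 ↔ ∃ c : K, ∀ v, ρ g v = c • v := by
  constructor
  · intro h
    refine ⟨(χ g : K)⁻¹, fun v => ?_⟩
    rw [eq_inv_smul_iff₀ (χ g).ne_zero, ← twist_apply, h, LinearEquiv.coe_one, id_eq]
  · rintro ⟨c, hc⟩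
    refine (isRotation_twist hB hV hdet hχ g).eq_one_of_smul hB (hV ▸ by decide) (c := χ g * c) ?_
    intro v
    rw [twist_apply, hc, mul_smul]

theorem isPolyhedral_range_twist [FiniteDimensional K V] [IsAlgClosed K] [NeZero (2 : K)]
    (hirr : ActsIrreducibly ρ.range) (hB : B.Nondegenerate) (hV : finrank K V = 3)
    (hcard : (Nat.card G : K) ≠ 0) (hdet : ∀ g, LinearMap.det (ρ g : V →ₗ[K] V) = 1)
    (hχ : ∀ g v w, B (ρ g v) (ρ g w) = χ g * B v w) : IsPolyhedral (twist χ ρ).range := by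
  refine (hirr.twist χ).isPolyhedral ?_ hB hV ?_
  · rintro _ ⟨g, rfl⟩
    exact isRotation_twist hB hV hdet hχ g
  · obtain ⟨m, hm⟩ := Subgroup.card_range_dvd (twist χ ρ)
    rw [hm, Nat.cast_mul] at hcard
    exact left_ne_zero_of_mul hcard

end SemiInvariantForms

section HomogeneousPolynomials

variable {σ R : Type*} [CommRing R] {f : MvPolynomial σ R}

lemma exists_linearForm_eval_eq (hf : f.IsHomogeneous 1) :
    ∃ φ : Module.Dual R (σ → R), ∀ v, MvPolynomial.eval v f = φ v := by
  replace hf : f ∈ MvPolynomial.homogeneousSubmodule σ R 1 := hf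
  rw [MvPolynomial.homogeneousSubmodule_one_eq_span_X] at hf
  induction hf using Submodule.span_induction with
  | mem p hp =>
    obtain ⟨i, rfl⟩ := hp
    exact ⟨LinearMap.proj i, fun v => MvPolynomial.eval_X i⟩
  | zero => exact ⟨0, fun v => map_zero _⟩
  | add p q _ _ hp hq =>
    obtain ⟨φ, hφ⟩ := hp
    obtain ⟨ψ, hψ⟩ := hq
    exact ⟨φ + ψ, fun v => by rw [map_add, hφ, hψ, LinearMap.add_apply]⟩
  | smul c p _ hp =>
    obtain ⟨φ, hφ⟩ := hp
    exact ⟨c • φ, fun v => by rw [MvPolynomial.smul_eval, hφ, LinearMap.smul_apply, smul_eq_mul]⟩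

lemma exists_quadraticForm_eval_eq (hf : f.IsHomogeneous 2) :
    ∃ Q : QuadraticForm R (σ → R), ∀ v, MvPolynomial.eval v f = Q v := by
  replace hf : f ∈ MvPolynomial.homogeneousSubmodule σ R 2 := hf
  rw [← MvPolynomial.homogeneousSubmodule_one_pow, sq] at hf
  induction hf using Submodule.mul_induction_on' with
  | mem_mul_mem p hp q hq =>
    obtain ⟨φ, hφ⟩ := exists_linearForm_eval_eq hp
    obtain ⟨ψ, hψ⟩ := exists_linearForm_eval_eq hq
    exact ⟨QuadraticMap.linMulLin φ ψ, fun v => by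
      rw [map_mul, hφ, hψ, QuadraticMap.linMulLin_apply]⟩
  | add p _ q _ hp hq =>
    obtain ⟨P, hP⟩ := hp
    obtain ⟨Q, hQ⟩ := hq
    exact ⟨P + Q, fun v => by rw [map_add, hP, hQ, _root_.add_apply]⟩

end HomogeneousPolynomials

section SemiInvariantPolynomials

open Module

variable {K : Type*} [Field K]

lemma polarBilin_apply_map_map {V : Type*} [AddCommGroup V] [Module K V] {Q : QuadraticForm K V}
    {g : V ≃ₗ[K] V} {c : K} (h : ∀ v, Q (g v) = c * Q v) (v w : V) :
    Q.polarBilin (g v) (g w) = c * Q.polarBilin v w := by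
  simp only [QuadraticMap.polarBilin_apply_apply, QuadraticMap.polar, ← map_add, h]
  ring

namespace ActsIrreducibly

lemma polarBilin_nondegenerate {V : Type*} [AddCommGroup V] [Module K V] [NeZero (2 : K)]
    {H : Subgroup (V ≃ₗ[K] V)} (hH : ActsIrreducibly H) {Q : QuadraticForm K V} (hQ0 : Q ≠ 0)
    (hQ : ∀ g ∈ H, ∃ c : K, ∀ v, Q (g v) = c * Q v) : Q.polarBilin.Nondegenerate := by
  refine hH.nondegenerate_of_semiinvariant ?_ ?_ fun g hg => ?_
  · intro v w h
    rwa [QuadraticMap.polarBilin_apply_apply, QuadraticMap.polar_comm] at h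
  · obtain ⟨v, hv⟩ := DFunLike.ne_iff.mp hQ0
    refine fun hB => hv ((mul_eq_zero_iff_left (NeZero.ne (2 : K))).mp ?_)
    have hvv := LinearMap.congr_fun₂ hB v v
    rwa [QuadraticMap.polarBilin_apply_apply, QuadraticMap.polar_self, nsmul_eq_mul] at hvv
  · obtain ⟨c, hc⟩ := hQ g hg
    exact ⟨c, polarBilin_apply_map_map hc⟩

variable [Infinite K] {σ : Type*} {H : Subgroup ((σ → K) ≃ₗ[K] (σ → K))}
  {f : MvPolynomial σ K}

lemma eq_zero_of_isHomogeneous_one [Fintype σ] (hH : ActsIrreducibly H)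
    (hσ : 1 < Fintype.card σ) (hf : f.IsHomogeneous 1)
    (hsemi : ∀ g ∈ H, ∃ c : K, ∀ v, MvPolynomial.eval (g v) f = c * MvPolynomial.eval v f) :
    f = 0 := by
  obtain ⟨φ, hφ⟩ := exists_linearForm_eval_eq hf
  have hφ0 : φ = 0 := by
    refine hH.eq_zero_of_ker_invariant (by rwa [finrank_fintype_fun_eq_card]) fun g hg v hv => ?_
    obtain ⟨c, hc⟩ := hsemi g hg
    rw [← hφ, hc, hφ, hv, mul_zero]
  exact MvPolynomial.funext fun v => by rw [hφ, hφ0, LinearMap.zero_apply, map_zero]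

lemma exists_nondegenerate_quadraticForm (hH : ActsIrreducibly H) [NeZero (2 : K)] (hf0 : f ≠ 0)
    (hf : f.IsHomogeneous 2)
    (hsemi : ∀ g ∈ H, ∃ c : K, ∀ v, MvPolynomial.eval (g v) f = c * MvPolynomial.eval v f) :
    ∃ Q : QuadraticForm K (σ → K),
      (∀ v, MvPolynomial.eval v f = Q v) ∧ Q.polarBilin.Nondegenerate := by
  obtain ⟨Q, hQ⟩ := exists_quadraticForm_eval_eq hf
  refine ⟨Q, hQ, hH.polarBilin_nondegenerate ?_ (by simpa only [hQ] using hsemi)⟩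
  rintro rfl
  exact hf0 (MvPolynomial.funext fun v => by rw [hQ, _root_.zero_apply, map_zero])

end ActsIrreducibly

end SemiInvariantPolynomials

section SpecialLinearGroups

variable {n K : Type*} [Fintype n] [DecidableEq n] [Field K]

/-- The natural representation of a subgroup of `SL(n, K)` on `n → K`. -/
def naturalRep (G : Subgroup (SpecialLinearGroup n K)) : G →* ((n → K) ≃ₗ[K] (n → K)) :=
  SpecialLinearGroup.toLin'.comp G.subtype

lemma naturalRep_apply {G : Subgroup (SpecialLinearGroup n K)} (g : G) (v : n → K) :
    naturalRep G g v = (g : Matrix n n K) *ᵥ v :=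
  rfl

lemma det_naturalRep {G : Subgroup (SpecialLinearGroup n K)} (g : G) :
    LinearMap.det (naturalRep G g : (n → K) →ₗ[K] (n → K)) = 1 :=
  (LinearMap.det_toLin' (g : Matrix n n K)).trans g.1.det_coe

lemma toGL_mem_center_iff_exists_mulVec_eq_smul (g : SpecialLinearGroup n K) :
    SpecialLinearGroup.toGL g ∈ Subgroup.center (GL n K) ↔
      ∃ c : K, ∀ v, (g : Matrix n n K) *ᵥ v = c • v := by
  rw [SpecialLinearGroup.toGL_mem_center_iff, Matrix.SpecialLinearGroup.mem_center_iff]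
  constructor
  · rintro ⟨c, -, hc⟩
    exact ⟨c, fun v => by rw [← hc, scalar_apply, ← smul_one_eq_diagonal, smul_mulVec, one_mulVec]⟩
  · rintro ⟨c, hc⟩
    have hg : scalar n c = (g : Matrix n n K) := by
      refine toLin'.injective (LinearMap.ext fun v => ?_)
      rw [toLin'_apply, toLin'_apply, hc, scalar_apply, ← smul_one_eq_diagonal, smul_mulVec,
        one_mulVec]
    refine ⟨c, ?_, hg⟩
    rw [← g.det_coe, ← hg, scalar_apply, det_diagonal, Finset.prod_const, Finset.card_univ]

lemma nonempty_map_mk_toGL_mulEquiv_range {G : Subgroup (SpecialLinearGroup n K)} {M : Type*}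
    [Group M] (τ : G →* M)
    (hτ : ∀ g, τ g = 1 ↔ ∃ c : K, ∀ v, naturalRep G g v = c • v) :
    Nonempty (G.map ((QuotientGroup.mk' (Subgroup.center (GL n K))).comp
      SpecialLinearGroup.toGL) ≃* τ.range) := by
  let π := ((QuotientGroup.mk' (Subgroup.center (GL n K))).comp SpecialLinearGroup.toGL).comp
    G.subtype
  have hker : π.ker = τ.ker := by
    ext g
    rw [MonoidHom.mem_ker, MonoidHom.mem_ker, hτ]
    exact (QuotientGroup.eq_one_iff _).trans (toGL_mem_center_iff_exists_mulVec_eq_smul g.1)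
  have hrange : G.map ((QuotientGroup.mk' (Subgroup.center (GL n K))).comp
      SpecialLinearGroup.toGL) = π.range := by
    rw [MonoidHom.range_comp, G.range_subtype]
  exact ⟨(MulEquiv.subgroupCongr hrange).trans <|
    (QuotientGroup.quotientKerEquivRange π).symm.trans <|
    (QuotientGroup.quotientMulEquivOfEq hker).trans (QuotientGroup.quotientKerEquivRange τ)⟩

end SpecialLinearGroups

-- As `Nat.card` of an infinite group is `0`, `hcard` says that `G` is finite of order prime to the
-- characteristic.
theorem stmt_4_general {K : Type*} [Field K] [IsAlgClosed K] [NeZero (2 : K)]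
    (G : Subgroup (SpecialLinearGroup (Fin 3) K)) (hcard : (Nat.card G : K) ≠ 0)
    (hirr : ∀ W : Submodule K (Fin 3 → K),
      (∀ g ∈ G, ∀ v ∈ W, (g : Matrix (Fin 3) (Fin 3) K) *ᵥ v ∈ W) → W = ⊥ ∨ W = ⊤)
    (f : MvPolynomial (Fin 3) K) (d : ℕ) (hd1 : 1 ≤ d) (hd2 : d ≤ 2)
    (hf0 : f ≠ 0) (hfhom : f.IsHomogeneous d)
    (hsemi : ∃ χ : G →* Kˣ, ∀ (g : G) (v : Fin 3 → K),
      MvPolynomial.eval (((g⁻¹ : G) : Matrix (Fin 3) (Fin 3) K) *ᵥ v) f =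
        χ g * MvPolynomial.eval v f) :
    d = 2 ∧
    (∀ v : Fin 3 → K,
      (∀ w, MvPolynomial.eval (v + w) f = MvPolynomial.eval v f + MvPolynomial.eval w f) →
        v = 0) ∧
    IsPolyhedral (G.map ((QuotientGroup.mk' (Subgroup.center (GL (Fin 3) K))).comp
      SpecialLinearGroup.toGL)) := by
  obtain ⟨χ, hχ⟩ := hsemi
  have hρ : ActsIrreducibly (naturalRep G).range := fun W hW =>
    hirr W fun g hg v hv => hW _ ⟨⟨g, hg⟩, rfl⟩ v hv
  have hρχ (g : G) (v : Fin 3 → K) :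
      MvPolynomial.eval (naturalRep G g v) f = χ⁻¹ g * MvPolynomial.eval v f := by
    simpa [naturalRep_apply] using hχ g⁻¹ v
  have hρsemi : ∀ g ∈ (naturalRep G).range, ∃ c : K, ∀ v,
      MvPolynomial.eval (g v) f = c * MvPolynomial.eval v f := by
    rintro _ ⟨g, rfl⟩
    exact ⟨_, hρχ g⟩
  obtain rfl | rfl : d = 1 ∨ d = 2 := by lia
  · exact absurd (hρ.eq_zero_of_isHomogeneous_one (by decide) hfhom hρsemi) hf0
  · obtain ⟨Q, hQ, hB⟩ := hρ.exists_nondegenerate_quadraticForm hf0 hfhom hρsemi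
    have hV : Module.finrank K (Fin 3 → K) = 3 := Module.finrank_fin_fun K
    have hBχ (g : G) := polarBilin_apply_map_map (Q := Q) (by simpa only [hQ] using hρχ g)
    refine ⟨rfl, fun v hv => hB.1 v fun w => ?_, ?_⟩
    · rw [QuadraticMap.polarBilin_apply_apply, QuadraticMap.polar, ← hQ, ← hQ, ← hQ, hv]
      ring
    · obtain ⟨e⟩ := nonempty_map_mk_toGL_mulEquiv_range _
        (twist_eq_one_iff_exists_smul hB hV det_naturalRep hBχ)
      exact (isPolyhedral_range_twist hρ hB hV hcard det_naturalRep hBχ).of_mulEquiv e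

/-- If a finite irreducible subgroup `G ≤ SL(3, ℂ)` has a nonzero homogeneous
semi-invariant `f` of degree at most 2, then `f` has degree exactly 2, `f` is a nondegenerate
quadratic form, and the image `Ḡ` of `G` in `PGL(3, ℂ)` is dihedral of order `2n` (`n ≥ 2`),
`A₄`, `S₄` or `A₅`. -/
theorem stmt_4 (G : Subgroup (SpecialLinearGroup (Fin 3) ℂ)) (hGfin : Finite G)
    (hirr : ∀ W : Submodule ℂ (Fin 3 → ℂ),
      (∀ g ∈ G, ∀ v ∈ W, Matrix.mulVec (g : Matrix (Fin 3) (Fin 3) ℂ) v ∈ W) →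
      W = ⊥ ∨ W = ⊤)
    (f : MvPolynomial (Fin 3) ℂ) (d : ℕ) (hd1 : 1 ≤ d) (hd2 : d ≤ 2)
    (hf0 : f ≠ 0) (hfhom : f.IsHomogeneous d)
    (hsemi : ∃ χ : G →* ℂˣ, ∀ (g : G) (v : Fin 3 → ℂ),
      MvPolynomial.eval
          (Matrix.mulVec
            (((g : SpecialLinearGroup (Fin 3) ℂ)⁻¹ : SpecialLinearGroup (Fin 3) ℂ) :
              Matrix (Fin 3) (Fin 3) ℂ) v) f
        = (χ g : ℂ) * MvPolynomial.eval v f)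
    (Gbar : Subgroup (GL (Fin 3) ℂ ⧸ Subgroup.center (GL (Fin 3) ℂ)))
    (hGbar : Gbar = Subgroup.map
      ((QuotientGroup.mk' (Subgroup.center (GL (Fin 3) ℂ))).comp
        SpecialLinearGroup.toGL) G) :
    d = 2 ∧
    (∀ v : Fin 3 → ℂ,
      (∀ w : Fin 3 → ℂ,
        MvPolynomial.eval (v + w) f = MvPolynomial.eval v f + MvPolynomial.eval w f) →
      v = 0) ∧
    ((∃ n, 2 ≤ n ∧ Nonempty (Gbar ≃* DihedralGroup n)) ∨
      Nonempty (Gbar ≃* alternatingGroup (Fin 4)) ∨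
      Nonempty (Gbar ≃* Equiv.Perm (Fin 4)) ∨
      Nonempty (Gbar ≃* alternatingGroup (Fin 5))) := by
  subst hGbar
  obtain ⟨hd, hrad, hpoly⟩ := stmt_4_general G (Nat.cast_ne_zero.mpr Nat.card_pos.ne') hirr f d hd1
    hd2 hf0 hfhom hsemi
  exact ⟨hd, hrad, .inr hpoly⟩
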